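/- arXiv:1607.04888 — 2 statements merged into one kernel-verified Lean document; each statement's English description precedes it below -/
import Mathlib

section
/- There exists a threshold N such that the following holds for all integers r, h ≥ N satisfying min{r+1, h} ≥ 10·(ln max{r+1, h})². Let A be a finite nonempty subset of an abelian group, let K be a real number with |A−A| = K·|A| (where A−A = {a−b : a,b ∈ A}), and let λ₁, …, λ_h be nonzero integers with |λᵢ| ≤ 2^r for every i. Then |λ₁·A + λ₂·A + … + λ_h·A| ≤ K^(7rh/ln(r+h)) · |A|. -/
open Pointwise

/-- The dilate `λ · A = {λa : a ∈ A}` of a finite set in an abelian group. -/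
def dilate {G : Type} [AddCommGroup G] [DecidableEq G] (l : ℤ) (A : Finset G) : Finset G :=
  A.image fun a => l • a

/-!
The basic move is a Ruzsa-type inequality, `#(X + c • Y) * #A ≤ #(X + c • A) * #(Y - A)`: in any
sumset a summand `c • Y` may be replaced by `c • A` at the price of a factor `#(Y - A) / #A`. When
`Y` is contained in a sum of `n` copies of `±A`, Plünnecke's inequality bounds this factor by
`K ^ (n + 1)`. Replacements lead from `∑ i, λᵢ • A` to a chain `∑ j, b ^ j • A`, which Horner's
scheme handles.

Let `k` be the integer part of `log₈ (max (r + 1) h)`. If `h` is the larger of `r + 1` and `h`,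
expand every `λᵢ` in base `b = 2 ^ k`; in each of the about `r / k` digit positions, collect the
summands carrying the same digit. If `r + 1` is the larger, cut the indices into about `h / k`
blocks of size at most `k` and collect the binary positions `j` at which the digits of the `λᵢ`
in the block form a given pattern; there are only `2 ^ k` patterns. In both cases the exponent is at
most `2 * r * h / k`, and `log (r + h) ≤ 3 * k`.
-/

section SumsOfDilates

open scoped Finset

variable {R G ι κ : Type*} [AddCommGroup G] [DecidableEq G] {A Y Y' Z Z' W : Finset G} {K : ℝ}

/-- The Plünnecke-type hypothesis on `A`: every `p`-fold sumset minus `q`-fold sumset of `A` has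
size at most `K ^ (p + q) * #A`. By the Plünnecke–Ruzsa inequality this holds as soon as
`#(A - A) ≤ K * #A` or `#(A + A) ≤ K * #A`. The case `p = q = 0` forces `A` to be nonempty. -/
def PluenneckeBound (A : Finset G) (K : ℝ) : Prop :=
  ∀ p q : ℕ, (#(p • A - q • A) : ℝ) ≤ K ^ (p + q) * #A

namespace PluenneckeBound

theorem of_card_sub_le (hA : A.Nonempty) (hK : (#(A - A) : ℝ) ≤ K * #A) :
    PluenneckeBound A K := fun p q ↦ by
  have hA₀ : (0 : ℝ) < #A := by exact_mod_cast hA.card_pos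
  calc (#(p • A - q • A) : ℝ)
      ≤ (#(A - A) / #A) ^ (p + q) * #A := by
        simpa using (NNRat.cast_le (K := ℝ)).2
          (Finset.pluennecke_ruzsa_inequality_nsmul_sub_nsmul_sub hA A p q)
    _ ≤ K ^ (p + q) * #A := by
        gcongr
        exact (div_le_iff₀ hA₀).2 hK

theorem card_pos (hA : PluenneckeBound A K) : 0 < #A := by
  have h : (#(0 • A - 0 • A) : ℝ) ≤ #A := by simpa using hA 0 0
  refine lt_of_lt_of_le ?_ (Nat.cast_le.1 h)
  simp

theorem one_le (hA : PluenneckeBound A K) : 1 ≤ K := by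
  have h : (#A : ℝ) ≤ K * #A := by simpa using hA 1 0
  have hA₀ : (0 : ℝ) < #A := by exact_mod_cast hA.card_pos
  exact le_of_mul_le_mul_right (by simpa using h) hA₀

end PluenneckeBound

/-- `Y` is contained in a sum of at most `n` sets, each of them `A` or `-A`. The multiples `p • A`
and `q • A` are iterated sumsets, not dilates. -/
def SubsetSignedSum (A Y : Finset G) (n : ℕ) : Prop :=
  ∃ p q : ℕ, p + q ≤ n ∧ Y ⊆ p • A - q • A

namespace SubsetSignedSum

variable {m n : ℕ}

theorem mono (h : SubsetSignedSum A Y m) (hmn : m ≤ n) : SubsetSignedSum A Y n :=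
  let ⟨p, q, hpq, hY⟩ := h
  ⟨p, q, hpq.trans hmn, hY⟩

theorem self (A : Finset G) : SubsetSignedSum A A 1 := ⟨1, 0, le_rfl, by simp⟩

theorem neg (A : Finset G) : SubsetSignedSum A (-A) 1 := ⟨0, 1, le_rfl, by simp⟩

theorem add (hY : SubsetSignedSum A Y m) (hZ : SubsetSignedSum A Z n) :
    SubsetSignedSum A (Y + Z) (m + n) := by
  obtain ⟨p, q, hpq, hY⟩ := hY
  obtain ⟨p', q', hpq', hZ⟩ := hZ
  refine ⟨p + p', q + q', by omega, ?_⟩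
  rw [add_nsmul, add_nsmul, ← sub_add_sub_comm]
  exact Finset.add_subset_add hY hZ

theorem sub_self (hY : SubsetSignedSum A Y n) : SubsetSignedSum A (Y - A) (n + 1) :=
  sub_eq_add_neg Y A ▸ hY.add (neg A)

theorem sum (s : Finset ι) {Y : ι → Finset G} {n : ι → ℕ}
    (h : ∀ i ∈ s, SubsetSignedSum A (Y i) (n i)) :
    SubsetSignedSum A (∑ i ∈ s, Y i) (∑ i ∈ s, n i) := by
  classical
  induction s using Finset.induction_on with
  | empty => exact ⟨0, 0, le_rfl, by simp⟩
  | insert i s hi ih =>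
    rw [Finset.sum_insert hi, Finset.sum_insert hi]
    exact (h i (by simp)).add (ih fun j hj ↦ h j (by simp [hj]))

-- The dilate of `A` by an integer `n` is written `(n : R) • A`: under `open Pointwise`, `n • A`
-- with `n : ℕ` or `n : ℤ` is an iterated sumset.
theorem intCast_smul [Ring R] [Module R G] (A : Finset G) (n : ℤ) :
    SubsetSignedSum A ((n : R) • A) n.natAbs := by
  obtain ⟨k, rfl | rfl⟩ := n.eq_nat_or_neg
  · refine ⟨k, 0, by simp, Finset.image_subset_iff.2 fun a ha ↦ ?_⟩
    simpa [Nat.cast_smul_eq_nsmul] using Finset.nsmul_mem_nsmul ha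
  · refine ⟨0, k, by simp, Finset.image_subset_iff.2 fun a ha ↦ ?_⟩
    simpa [Nat.cast_smul_eq_nsmul] using Finset.nsmul_mem_nsmul ha

theorem card_le (h : SubsetSignedSum A Y n) (hA : PluenneckeBound A K) :
    (#Y : ℝ) ≤ K ^ n * #A := by
  obtain ⟨p, q, hpq, hY⟩ := h
  calc (#Y : ℝ) ≤ #(p • A - q • A) := by exact_mod_cast Finset.card_le_card hY
    _ ≤ K ^ (p + q) * #A := hA p q
    _ ≤ K ^ n * #A := by gcongr; exact hA.one_le

end SubsetSignedSum

theorem card_add_smul_mul_card_le [DistribSMul R G] (c : R) (X Y A : Finset G) :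
    #(X + c • Y) * #A ≤ #(X + c • A) * #(Y - A) := by
  classical
  rw [← Finset.card_product (X + c • A), ← mul_one #((X + c • A) ×ˢ (Y - A))]
  -- The identity `(x + c • a) + c • (y - a) = x + c • y` lets every `a ∈ A` represent `x + c • y`.
  refine Finset.card_mul_le_card_mul (fun z (u, v) ↦ u + c • v = z) (fun z hz ↦ ?_) fun w _ ↦ ?_
  · obtain ⟨x, hx, _, hcy, rfl⟩ := Finset.mem_add.1 hz
    obtain ⟨y, hy, rfl⟩ := Finset.mem_smul_finset.1 hcy
    refine Finset.card_le_card_of_injOn (fun a ↦ (x + c • a, y - a)) (fun a ha ↦ ?_) ?_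
    · rw [Finset.mem_coe, Finset.mem_bipartiteAbove]
      refine ⟨Finset.mk_mem_product (Finset.add_mem_add hx (Finset.smul_mem_smul_finset ha))
        (Finset.sub_mem_sub hy ha), ?_⟩
      simp only [add_assoc, ← smul_add, add_sub_cancel]
    · exact fun a _ a' _ h ↦ sub_right_injective (Prod.ext_iff.1 h).2
  · refine Finset.card_le_one_iff.2 fun hz hz' ↦ ?_
    exact ((Finset.mem_bipartiteBelow _).1 hz).2.symm.trans ((Finset.mem_bipartiteBelow _).1 hz').2

/-- Replacing the summand `Y` of a sumset by `Z` costs at most a factor `K ^ n`, whatever the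
other summands are. -/
def ReplaceCostLE (K : ℝ) (n : ℕ) (Y Z : Finset G) : Prop :=
  ∀ X : Finset G, (#(X + Y) : ℝ) ≤ K ^ n * #(X + Z)

namespace ReplaceCostLE

variable {m n : ℕ}

theorem of_subset (K : ℝ) (h : Y ⊆ Z) : ReplaceCostLE K 0 Y Z := fun X ↦ by
  simpa using Finset.card_le_card (Finset.add_subset_add_left h)

theorem mono (h : ReplaceCostLE K m Y Z) (hK : 1 ≤ K) (hmn : m ≤ n) : ReplaceCostLE K n Y Z :=
  fun X ↦ (h X).trans (by gcongr)

theorem trans (hK : 0 ≤ K) (hYZ : ReplaceCostLE K m Y Z) (hZW : ReplaceCostLE K n Z W) :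
    ReplaceCostLE K (m + n) Y W := fun X ↦
  calc (#(X + Y) : ℝ) ≤ K ^ m * #(X + Z) := hYZ X
    _ ≤ K ^ m * (K ^ n * #(X + W)) := by gcongr; exact hZW X
    _ = K ^ (m + n) * #(X + W) := by ring

theorem add_right (h : ReplaceCostLE K n Y Z) (W : Finset G) :
    ReplaceCostLE K n (Y + W) (Z + W) := fun X ↦ by
  simpa only [add_assoc, add_comm W] using h (X + W)

theorem add (hK : 0 ≤ K) (h : ReplaceCostLE K m Y Z) (h' : ReplaceCostLE K n Y' Z') :
    ReplaceCostLE K (m + n) (Y + Y') (Z + Z') := by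
  refine (h.add_right Y').trans hK ?_
  simpa only [add_comm Z] using h'.add_right Z

theorem sum (hK : 0 ≤ K) (s : Finset ι) {n : ι → ℕ} {Y Z : ι → Finset G}
    (h : ∀ i ∈ s, ReplaceCostLE K (n i) (Y i) (Z i)) :
    ReplaceCostLE K (∑ i ∈ s, n i) (∑ i ∈ s, Y i) (∑ i ∈ s, Z i) := by
  classical
  induction s using Finset.induction_on with
  | empty => exact of_subset K le_rfl
  | insert i s hi ih =>
    simp only [Finset.sum_insert hi]
    exact (h i (by simp)).add hK (ih fun j hj ↦ h j (by simp [hj]))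

theorem smul [DistribSMul R G] (hA : 0 < #A) (c : R) (h : (#(Y - A) : ℝ) ≤ K ^ n * #A) :
    ReplaceCostLE K n (c • Y) (c • A) := fun X ↦ by
  refine le_of_mul_le_mul_right ?_ (Nat.cast_pos.2 hA)
  calc (#(X + c • Y) : ℝ) * #A ≤ #(X + c • A) * #(Y - A) := by
        exact_mod_cast card_add_smul_mul_card_le c X Y A
    _ ≤ #(X + c • A) * (K ^ n * #A) := by gcongr
    _ = K ^ n * #(X + c • A) * #A := by ring

theorem card_le (h : ReplaceCostLE K n Y Z) : (#Y : ℝ) ≤ K ^ n * #Z := by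
  simpa using h 0

theorem card_sub_le (h : ReplaceCostLE K n Y Z) (A : Finset G) :
    (#(Y - A) : ℝ) ≤ K ^ n * #(Z - A) := by
  simpa only [sub_eq_neg_add] using h (-A)

end ReplaceCostLE

theorem exists_card_fiber_le [Fintype ι] {g k : ℕ} (h : Fintype.card ι ≤ g * k) :
    ∃ f : ι → Fin g, ∀ γ, Fintype.card {i // f i = γ} ≤ k := by
  obtain ⟨e⟩ := Function.Embedding.nonempty_of_card_le (α := ι) (β := Fin g × Fin k) (by simpa)
  refine ⟨fun i ↦ (e i).1, fun γ ↦ ?_⟩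
  have hinj : Function.Injective fun i : {i // (e i).1 = γ} ↦ (e i).2 := fun i j hij ↦
    Subtype.ext (e.injective (Prod.ext (i.2.trans j.2.symm) hij))
  simpa using Fintype.card_le_of_injective _ hinj

section Modules

variable [Ring R] [Module R G]

theorem sum_smul_subset_sum_smul (s : Finset ι) (c : ι → R) (A : Finset G) :
    (∑ i ∈ s, c i) • A ⊆ ∑ i ∈ s, c i • A := by
  refine Finset.image_subset_iff.2 fun a ha ↦ ?_
  rw [Finset.sum_smul, ← Finset.mem_coe, Finset.coe_sum]
  exact Set.finsetSum_mem_finsetSum _ _ _ fun i _ ↦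
    Finset.mem_coe.2 (Finset.smul_mem_smul_finset ha)

theorem sum_sum_mul_smul_subset [Fintype ι] [Fintype κ] (β : κ → R) (c : ι → κ → R)
    (A : Finset G) :
    ∑ i, (∑ j, β j * c i j) • A ⊆ ∑ j, β j • ∑ i, c i j • A :=
  calc ∑ i, (∑ j, β j * c i j) • A
      ⊆ ∑ i, ∑ j, (β j * c i j) • A := Finset.sum_le_sum fun i _ ↦ sum_smul_subset_sum_smul ..
    _ = ∑ j, β j • ∑ i, c i j • A := by
      rw [Finset.sum_comm]
      simp only [Finset.smul_sum, mul_smul]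

theorem natAbs_sign_le_one (l : ℤ) : l.sign.natAbs ≤ 1 := by
  rw [Int.natAbs_sign]
  split <;> simp

variable (R) in
theorem exists_signed_digits {b g : ℕ} {l : ℤ} (hl : l.natAbs < b ^ g) :
    ∃ d : Fin g → Fin b, (l : R) = ∑ j : Fin g, (b : R) ^ (j : ℕ) * ((d j * l.sign : ℤ) : R) := by
  obtain ⟨d, hd⟩ := finFunctionFinEquiv.surjective ⟨l.natAbs, hl⟩
  have hsum : l.natAbs = ∑ j : Fin g, (d j : ℕ) * b ^ (j : ℕ) := by
    rw [← finFunctionFinEquiv_apply, hd]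
  refine ⟨d, ?_⟩
  have hl' : l = ∑ j : Fin g, (b : ℤ) ^ (j : ℕ) * (d j * l.sign) := by
    conv_lhs => rw [← Int.sign_mul_natAbs l, hsum]
    push_cast
    rw [Finset.mul_sum]
    exact Finset.sum_congr rfl fun j _ ↦ by ring
  exact_mod_cast congrArg (Int.cast : ℤ → R) hl'

namespace PluenneckeBound

theorem replaceCostLE_smul (hA : PluenneckeBound A K) {n : ℕ} (c : R)
    (hY : SubsetSignedSum A Y n) : ReplaceCostLE K (n + 1) (c • Y) (c • A) :=
  .smul hA.card_pos c (hY.sub_self.card_le hA)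

theorem replaceCostLE_smul_sum_signs (hA : PluenneckeBound A K) (c : R) (s : Finset ι) {ε : ι → ℤ}
    (hε : ∀ i ∈ s, (ε i).natAbs ≤ 1) :
    ReplaceCostLE K (#s + 1) (c • ∑ i ∈ s, (ε i : R) • A) (c • A) := by
  refine hA.replaceCostLE_smul c ?_
  simpa using SubsetSignedSum.sum s fun i hi ↦ (SubsetSignedSum.intCast_smul A (ε i)).mono (hε i hi)

variable (R) in
theorem card_sum_pow_smul_sub_le (hA : PluenneckeBound A K) (b n : ℕ) :
    (#(∑ j : Fin n, (b : R) ^ (j : ℕ) • A - A) : ℝ) ≤ K ^ ((b + 2) * n + 1) * #A := by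
  induction n with
  | zero => simpa using (SubsetSignedSum.neg A).card_le hA
  | succ n ih =>
    set P : Finset G := ∑ j : Fin n, (b : R) ^ (j : ℕ) • A
    have hP : ∑ j : Fin (n + 1), (b : R) ^ (j : ℕ) • A = A + (b : R) • P := by
      simp [Fin.sum_univ_succ, P, Finset.smul_sum, pow_succ', mul_smul]
    have hbA : SubsetSignedSum A (A + (b : R) • A - A) (1 + b + 1) := by
      simpa using ((SubsetSignedSum.self A).add (.intCast_smul (R := R) A b)).sub_self
    calc (#(∑ j : Fin (n + 1), (b : R) ^ (j : ℕ) • A - A) : ℝ)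
        = #(A - A + (b : R) • P) := by rw [hP, add_sub_right_comm]
      _ ≤ K ^ ((b + 2) * n + 1) * #(A - A + (b : R) • A) :=
          ReplaceCostLE.smul hA.card_pos (b : R) ih (A - A)
      _ ≤ K ^ ((b + 2) * n + 1) * (K ^ (1 + b + 1) * #A) := by
          have := hA.one_le
          gcongr
          rw [← add_sub_right_comm]
          exact hbA.card_le hA
      _ = K ^ ((b + 2) * (n + 1) + 1) * #A := by ring

variable (R) in
theorem card_sum_pow_smul_le (hA : PluenneckeBound A K) (b n : ℕ) :
    (#(∑ j : Fin n, (b : R) ^ (j : ℕ) • A) : ℝ) ≤ K ^ ((b + 2) * n + 1) * #A := by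
  refine le_trans ?_ (hA.card_sum_pow_smul_sub_le R b n)
  exact_mod_cast Finset.card_le_card_sub_right (Finset.card_pos.1 hA.card_pos)

theorem replaceCostLE_sum_digit_smul [Fintype ι] (hA : PluenneckeBound A K) {b : ℕ}
    (d : ι → Fin b) {ε : ι → ℤ} (hε : ∀ i, (ε i).natAbs ≤ 1) :
    ReplaceCostLE K (Fintype.card ι + b) (∑ i, ((d i * ε i : ℤ) : R) • A)
      (∑ s : Fin b, ((s : ℕ) : R) • A) := by
  have hcost : ∑ s : Fin b, (#{i | d i = s} + 1) = Fintype.card ι + b := by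
    rw [Finset.sum_add_distrib, ← Finset.card_eq_sum_card_fiberwise fun _ _ ↦ Finset.mem_univ _]
    simp
  have hgroup : ∑ i, ((d i * ε i : ℤ) : R) • A =
      ∑ s : Fin b, ((s : ℕ) : R) • ∑ i with d i = s, (ε i : R) • A := by
    rw [← Finset.sum_fiberwise _ d]
    refine Finset.sum_congr rfl fun s _ ↦ ?_
    rw [Finset.smul_sum]
    refine Finset.sum_congr rfl fun i hi ↦ ?_
    rw [← (Finset.mem_filter.1 hi).2, ← mul_smul]
    norm_cast
  rw [hgroup, ← hcost]
  exact .sum (zero_le_one.trans hA.one_le) _ fun s _ ↦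
    hA.replaceCostLE_smul_sum_signs _ _ fun i _ ↦ hε i

variable (R) in
theorem card_sum_digit_smul_sub_le [Fintype ι] (hA : PluenneckeBound A K) {b : ℕ}
    (d : ι → Fin b) {ε : ι → ℤ} (hε : ∀ i, (ε i).natAbs ≤ 1) :
    (#(∑ i, ((d i * ε i : ℤ) : R) • A - A) : ℝ) ≤
      K ^ (Fintype.card ι + b + b * b + 1) * #A := by
  have hdigits : ∑ s : Fin b, ((s : ℕ) : ℤ).natAbs ≤ b * b := by
    simpa using Finset.sum_le_card_nsmul Finset.univ (fun s : Fin b ↦ (s : ℕ)) b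
      fun s _ ↦ s.isLt.le
  have hall : SubsetSignedSum A (∑ s : Fin b, ((s : ℕ) : R) • A) (b * b) := by
    simpa using (SubsetSignedSum.sum Finset.univ fun (s : Fin b) _ ↦
      SubsetSignedSum.intCast_smul (R := R) A (s : ℕ)).mono hdigits
  have hK := hA.one_le
  calc (#(∑ i, ((d i * ε i : ℤ) : R) • A - A) : ℝ)
      ≤ K ^ (Fintype.card ι + b) * #(∑ s : Fin b, ((s : ℕ) : R) • A - A) :=
        (hA.replaceCostLE_sum_digit_smul d hε).card_sub_le A
    _ ≤ K ^ (Fintype.card ι + b) * (K ^ (b * b + 1) * #A) := by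
        gcongr
        exact hall.sub_self.card_le hA
    _ = K ^ (Fintype.card ι + b + b * b + 1) * #A := by ring

variable (R) in
theorem card_sum_smul_le_of_natAbs_lt_pow [Fintype ι] (hA : PluenneckeBound A K) {b g : ℕ}
    (lam : ι → ℤ) (hlam : ∀ i, (lam i).natAbs < b ^ g) :
    (#(∑ i, (lam i : R) • A) : ℝ) ≤
      K ^ (g * (Fintype.card ι + 2 * b + b * b + 3) + 1) * #A := by
  choose d hd using fun i ↦ exists_signed_digits R (hlam i)
  have hK := hA.one_le
  set Y : Fin g → Finset G := fun j ↦ ∑ i, ((d i j * (lam i).sign : ℤ) : R) • A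
  have hsub : ∑ i, (lam i : R) • A ⊆ ∑ j : Fin g, (b : R) ^ (j : ℕ) • Y j := by
    simp only [hd]
    exact sum_sum_mul_smul_subset _ _ A
  have hcost : ReplaceCostLE K (∑ _ : Fin g, (Fintype.card ι + b + b * b + 1))
      (∑ j : Fin g, (b : R) ^ (j : ℕ) • Y j) (∑ j : Fin g, (b : R) ^ (j : ℕ) • A) :=
    .sum (zero_le_one.trans hK) _ fun j _ ↦ .smul hA.card_pos _ <|
      hA.card_sum_digit_smul_sub_le R (d · j) fun i ↦ natAbs_sign_le_one _
  calc (#(∑ i, (lam i : R) • A) : ℝ)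
      ≤ #(∑ j : Fin g, (b : R) ^ (j : ℕ) • Y j) := by exact_mod_cast Finset.card_le_card hsub
    _ ≤ K ^ (∑ _ : Fin g, (Fintype.card ι + b + b * b + 1)) *
          #(∑ j : Fin g, (b : R) ^ (j : ℕ) • A) := hcost.card_le
    _ ≤ K ^ (∑ _ : Fin g, (Fintype.card ι + b + b * b + 1)) *
          (K ^ ((b + 2) * g + 1) * #A) := by
        gcongr
        exact hA.card_sum_pow_smul_le R b g
    _ = K ^ (g * (Fintype.card ι + 2 * b + b * b + 3) + 1) * #A := by
        simp only [Finset.sum_const, Finset.card_univ, Fintype.card_fin, smul_eq_mul]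
        ring

variable (R) in
theorem replaceCostLE_sum_smul_sum_two_pow_smul [Fintype ι] (hA : PluenneckeBound A K) {m : ℕ}
    (lam : ι → ℤ) (hlam : ∀ i, (lam i).natAbs < 2 ^ m) :
    ReplaceCostLE K (2 ^ Fintype.card ι * (Fintype.card ι + 1)) (∑ i, (lam i : R) • A)
      (∑ j : Fin m, (2 : R) ^ (j : ℕ) • A) := by
  classical
  choose d hd using fun i ↦ exists_signed_digits R (b := 2) (hlam i)
  set μ : (ι → Fin 2) → R := fun v ↦ ∑ j with (d · j) = v, (2 : R) ^ (j : ℕ)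
  set c : ι → (ι → Fin 2) → R := fun i v ↦ ((v i * (lam i).sign : ℤ) : R)
  have hcol (i : ι) : (lam i : R) = ∑ v, μ v * c i v := by
    rw [hd, ← Finset.sum_fiberwise _ fun j i ↦ d i j]
    refine Finset.sum_congr rfl fun v _ ↦ ?_
    rw [Finset.sum_mul]
    refine Finset.sum_congr rfl fun j hj ↦ ?_
    rw [← (Finset.mem_filter.1 hj).2]
    rfl
  have hsub : ∑ i, (lam i : R) • A ⊆ ∑ v, μ v • ∑ i, c i v • A := by
    simp only [hcol]
    exact sum_sum_mul_smul_subset μ c A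
  have hsigns (i : ι) (v : ι → Fin 2) : (v i * (lam i).sign : ℤ).natAbs ≤ 1 := by
    rw [Int.natAbs_mul]
    exact Nat.mul_le_mul (Nat.le_of_lt_succ (v i).isLt) (natAbs_sign_le_one _)
  have hcost : ReplaceCostLE K (∑ _ : ι → Fin 2, (Fintype.card ι + 1))
      (∑ v, μ v • ∑ i, c i v • A) (∑ v, μ v • A) :=
    .sum (zero_le_one.trans hA.one_le) _ fun v _ ↦
      hA.replaceCostLE_smul_sum_signs (μ v) Finset.univ fun i _ ↦ hsigns i v
  have hcols : ∑ v, μ v • A ⊆ ∑ j : Fin m, (2 : R) ^ (j : ℕ) • A := by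
    rw [← Finset.sum_fiberwise _ fun j i ↦ d i j]
    exact Finset.sum_le_sum fun v _ ↦ sum_smul_subset_sum_smul ..
  have hK := zero_le_one.trans hA.one_le
  simpa using ((ReplaceCostLE.of_subset K hsub).trans hK hcost).trans hK (.of_subset K hcols)

variable (R) in
theorem card_sum_smul_le_of_card_le_mul [Fintype ι] (hA : PluenneckeBound A K) {k g m : ℕ}
    (hcard : Fintype.card ι ≤ g * k) (lam : ι → ℤ) (hlam : ∀ i, (lam i).natAbs < 2 ^ m) :
    (#(∑ i, (lam i : R) • A) : ℝ) ≤
      K ^ (g * (2 ^ k * (k + 1)) + m * (g + 1) + (4 * m + 1)) * #A := by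
  classical
  obtain ⟨block, hblock⟩ := exists_card_fiber_le hcard
  have hK := hA.one_le
  set P : Finset G := ∑ j : Fin m, (2 : R) ^ (j : ℕ) • A
  have hblocks : ReplaceCostLE K (∑ _ : Fin g, 2 ^ k * (k + 1)) (∑ i, (lam i : R) • A)
      (∑ _ : Fin g, P) := by
    rw [← Fintype.sum_fiberwise block]
    refine .sum (zero_le_one.trans hK) _ fun γ _ ↦ ?_
    have hγ := hblock γ
    refine (hA.replaceCostLE_sum_smul_sum_two_pow_smul R (fun i : {i // block i = γ} ↦ lam i)
      fun i ↦ hlam i).mono hK (by gcongr; norm_num)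
  have hmerge : ∑ _ : Fin g, P = ∑ j : Fin m, (2 : R) ^ (j : ℕ) • ∑ _ : Fin g, A := by
    rw [Finset.sum_comm]
    simp only [Finset.smul_sum]
  have hchains : ReplaceCostLE K (∑ _ : Fin m, (g + 1)) (∑ _ : Fin g, P) P := by
    rw [hmerge]
    refine .sum (zero_le_one.trans hK) _ fun j _ ↦ hA.replaceCostLE_smul _ ?_
    simpa using SubsetSignedSum.sum Finset.univ fun (_ : Fin g) _ ↦ SubsetSignedSum.self A
  calc (#(∑ i, (lam i : R) • A) : ℝ)
      ≤ K ^ (∑ _ : Fin g, 2 ^ k * (k + 1) + ∑ _ : Fin m, (g + 1)) * #P :=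
        (hblocks.trans (zero_le_one.trans hK) hchains).card_le
    _ ≤ K ^ (∑ _ : Fin g, 2 ^ k * (k + 1) + ∑ _ : Fin m, (g + 1)) *
          (K ^ ((2 + 2) * m + 1) * #A) := by
        gcongr
        simpa [P] using hA.card_sum_pow_smul_le R 2 m
    _ = K ^ (g * (2 ^ k * (k + 1)) + m * (g + 1) + (4 * m + 1)) * #A := by
        simp only [Finset.sum_const, Finset.card_univ, Fintype.card_fin, smul_eq_mul]
        ring

end PluenneckeBound

end Modules

section Exponents

variable {r h k : ℕ}

theorem four_hundred_mul_log_le {M m : ℕ} (hM : M ≠ 0) (h : 200 * Real.log M ≤ m) :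
    400 * Nat.log 8 M ≤ m := by
  have hlog : (Nat.log 8 M : ℝ) * Real.log 8 ≤ Real.log M := by
    rw [← Real.log_pow]
    exact Real.log_le_log (by positivity) (by exact_mod_cast Nat.pow_log_le_self 8 hM)
  have hlog8 : 2 ≤ Real.log 8 := by
    rw [show (8 : ℝ) = 2 ^ 3 by norm_num, Real.log_pow]
    norm_num
    linarith [Real.log_two_gt_d9]
  have h400 : (400 * Nat.log 8 M : ℝ) ≤ m := by nlinarith
  exact_mod_cast h400

theorem log_add_le (hk : 10 ≤ k) (hr : r < 8 ^ (k + 1)) (hh : h < 8 ^ (k + 1)) :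
    Real.log (r + h) ≤ 3 * k := by
  rcases (r + h).eq_zero_or_pos with h0 | hpos
  · rw [show (r + h : ℝ) = 0 by exact_mod_cast h0, Real.log_zero]
    positivity
  have hpow : r + h ≤ 2 ^ (3 * k + 4) := by
    rw [show 2 ^ (3 * k + 4) = 2 * 8 ^ (k + 1) by rw [show 8 = 2 ^ 3 by norm_num, ← pow_mul]; ring]
    omega
  have hk' : (10 : ℝ) ≤ k := by exact_mod_cast hk
  calc Real.log (r + h) ≤ Real.log (2 ^ (3 * k + 4)) :=
        Real.log_le_log (by exact_mod_cast hpos) (by exact_mod_cast hpow)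
    _ = (3 * k + 4) * Real.log 2 := by rw [Real.log_pow]; push_cast; rfl
    _ ≤ 3 * k := by nlinarith [Real.log_two_lt_d9]

theorem le_div_log_of_mul_le {E : ℕ} (hrh : 2 ≤ r + h) (hlog : Real.log (r + h) ≤ 3 * k)
    (hE : E * k ≤ 2 * (r * h)) : (E : ℝ) ≤ (7 * r * h : ℝ) / Real.log (r + h) := by
  have hlog₀ : 0 < Real.log ((r : ℝ) + h) :=
    Real.log_pos (one_lt_two.trans_le (by exact_mod_cast hrh))
  have hE' : (E * k : ℝ) ≤ 2 * (r * h) := by exact_mod_cast hE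
  rw [le_div_iff₀ hlog₀]
  calc (E : ℝ) * Real.log (r + h) ≤ E * (3 * k) := by gcongr
    _ = 3 * (E * k) := by ring
    _ ≤ 3 * (2 * (r * h)) := by gcongr
    _ ≤ 7 * r * h := by nlinarith [(by positivity : (0 : ℝ) ≤ r * h)]

theorem two_mul_succ_le_two_pow (hk : 10 ≤ k) : 2 * (k + 1) ≤ 2 ^ k := by
  induction k, hk using Nat.le_induction with
  | base => norm_num
  | succ n hn ih => rw [pow_succ]; omega

theorem two_pow_mul_two_pow_le {M : ℕ} (hk : 10 ≤ k) (hM : 8 ^ k ≤ M) :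
    1024 * (2 ^ k * 2 ^ k) ≤ M :=
  calc 1024 * (2 ^ k * 2 ^ k) ≤ 2 ^ k * (2 ^ k * 2 ^ k) := by
        gcongr
        exact Nat.pow_le_pow_right two_pos hk
    _ = 8 ^ k := by rw [← mul_pow, ← mul_pow]; norm_num
    _ ≤ M := hM

theorem exponent_mul_le_of_two_pow_base (hk : 10 ≤ k) (hr : 400 * k ≤ r + 1) (hh : 8 ^ k ≤ h) :
    ((r / k + 1) * (h + 2 * 2 ^ k + 2 ^ k * 2 ^ k + 3) + 1) * k ≤ 2 * (r * h) := by
  have hgk : (r / k + 1) * k ≤ r + k := by linarith [Nat.div_mul_le_self r k]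
  have hgk' : 10 * ((r / k + 1) * k) ≤ 11 * r := by omega
  have hpow : 1024 ≤ 2 ^ k := Nat.pow_le_pow_right two_pos hk
  have hsq := two_pow_mul_two_pow_le hk hh
  have hdigits : 10 * (h + 2 * 2 ^ k + 2 ^ k * 2 ^ k + 3) ≤ 11 * h := by nlinarith
  have hmul := Nat.mul_le_mul hgk' hdigits
  have hkr : 10 * k ≤ r * h := by nlinarith
  nlinarith

theorem exponent_mul_le_of_blocks (hk : 10 ≤ k) (hr : 8 ^ k ≤ r + 1) (hh : 400 * k ≤ h) :
    ((h / k + 1) * (2 ^ k * (k + 1)) + (r + 1) * (h / k + 1 + 1) + (4 * (r + 1) + 1)) * k ≤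
      2 * (r * h) := by
  have hgk : (h / k + 1) * k ≤ h + k := by linarith [Nat.div_mul_le_self h k]
  have hgk' : 100 * ((h / k + 1) * k) ≤ 101 * h := by omega
  have hpow : 1024 ≤ 2 ^ k := Nat.pow_le_pow_right two_pos hk
  have hsq := two_pow_mul_two_pow_le hk hr
  have hsucc := two_mul_succ_le_two_pow hk
  have hpatterns : 10 * (2 ^ k * (k + 1)) ≤ r := by nlinarith
  have hr' : 1000 ≤ r := by nlinarith
  have hreplace : 1000 * ((h / k + 1) * k * (2 ^ k * (k + 1))) ≤ 101 * (r * h) := by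
    linarith [Nat.mul_le_mul hgk' hpatterns]
  have hmerge : 100 * ((r + 1) * ((h / k + 1) * k + k)) ≤ 121 * (r * h) := by
    linarith [Nat.mul_le_mul (show 10 * (r + 1) ≤ 11 * r by omega)
      (show 10 * ((h / k + 1) * k + k) ≤ 11 * h by omega)]
  have hchain : 100 * ((4 * (r + 1) + 1) * k) ≤ 5 * (r * h) := by
    linarith [Nat.mul_le_mul (show 4 * (r + 1) + 1 ≤ 5 * r by omega)
      (show 100 * k ≤ h by omega)]
  calc ((h / k + 1) * (2 ^ k * (k + 1)) + (r + 1) * (h / k + 1 + 1) + (4 * (r + 1) + 1)) * k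
      = (h / k + 1) * k * (2 ^ k * (k + 1)) + (r + 1) * ((h / k + 1) * k + k) +
          (4 * (r + 1) + 1) * k := by ring
    _ ≤ 2 * (r * h) := by omega

end Exponents

theorem sum_of_dilates_bound_diff_general [Ring R] [Module R G] (hA : PluenneckeBound A K)
    {r h : ℕ} (hmax : 8 ^ 10 ≤ max (r + 1) h)
    (hmin : 200 * Real.log (max (r + 1) h : ℕ) ≤ (min (r + 1) h : ℕ))
    (lam : Fin h → ℤ) (hlam : ∀ i, |lam i| ≤ 2 ^ r) :
    (#(∑ i, (lam i : R) • A) : ℝ) ≤ K ^ ((7 * r * h : ℝ) / Real.log (r + h)) * #A := by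
  set k := Nat.log 8 (max (r + 1) h)
  have hk : 10 ≤ k := Nat.le_log_of_pow_le (by norm_num) hmax
  have hk₀ : 0 < k := by omega
  have hk_le : 8 ^ k ≤ max (r + 1) h := Nat.pow_log_le_self 8 (by omega)
  have hk_lt : max (r + 1) h < 8 ^ (k + 1) := Nat.lt_pow_succ_log_self (by norm_num) _
  have hkmin : 400 * k ≤ min (r + 1) h := four_hundred_mul_log_le (by omega) hmin
  have hnat (i : Fin h) : (lam i).natAbs ≤ 2 ^ r := by zify; exact hlam i
  obtain ⟨E, hE, hcard⟩ : ∃ E : ℕ, E * k ≤ 2 * (r * h) ∧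
      (#(∑ i, (lam i : R) • A) : ℝ) ≤ K ^ E * #A := by
    rcases le_total (r + 1) h with hrh | hrh
    · rw [max_eq_right hrh] at hk_le
      refine ⟨_, exponent_mul_le_of_two_pow_base hk (by omega) hk_le, ?_⟩
      simpa using hA.card_sum_smul_le_of_natAbs_lt_pow R (b := 2 ^ k) (g := r / k + 1) lam
        fun i ↦ by
          rw [← pow_mul]
          exact (hnat i).trans_lt (Nat.pow_lt_pow_right one_lt_two (Nat.lt_mul_div_succ r hk₀))
    · rw [max_eq_left hrh] at hk_le
      refine ⟨_, exponent_mul_le_of_blocks hk hk_le (by omega), ?_⟩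
      refine hA.card_sum_smul_le_of_card_le_mul R ?_ lam fun i ↦
        (hnat i).trans_lt (Nat.pow_lt_pow_right one_lt_two r.lt_succ_self)
      simpa [mul_comm] using (Nat.lt_mul_div_succ h hk₀).le
  have hlog : Real.log (r + h) ≤ 3 * k := log_add_le hk (by omega) (by omega)
  calc (#(∑ i, (lam i : R) • A) : ℝ) ≤ K ^ E * #A := hcard
    _ ≤ K ^ ((7 * r * h : ℝ) / Real.log (r + h)) * #A := by
        rw [← Real.rpow_natCast]
        gcongr
        · exact hA.one_le
        · exact le_div_log_of_mul_le (by omega) hlog hE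

end SumsOfDilates

theorem two_hundred_mul_log_le {M : ℕ} (hM : 8 ^ 10 ≤ M) :
    200 * Real.log M ≤ 10 * Real.log M ^ 2 := by
  have hlog : 20 ≤ Real.log M := by
    calc (20 : ℝ) ≤ 30 * Real.log 2 := by linarith [Real.log_two_gt_d9]
      _ = Real.log (8 ^ 10) := by
        rw [show (8 : ℝ) ^ 10 = 2 ^ 30 by norm_num, Real.log_pow]; norm_num
      _ ≤ Real.log M := Real.log_le_log (by norm_num) (by exact_mod_cast hM)
  nlinarith

/-- Theorem 1.3 (main theorem): there is a threshold `N` such that for all integers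
`r, h ≥ N` with `min (r+1) h ≥ 10 (ln max (r+1) h)^2`, any finite nonempty set `A` in an
abelian group with `|A−A| = K|A|` and nonzero `λᵢ` with `|λᵢ| ≤ 2^r` satisfies
`|λ₁·A + ⋯ + λ_h·A| ≤ K^(7rh/ln(r+h)) |A|`. -/
theorem sum_of_dilates_bound_diff :
    ∃ N : ℕ, ∀ r h : ℕ, N ≤ r → N ≤ h →
      (10 : ℝ) * Real.log (max (r + 1) h : ℕ) ^ 2 ≤ (min (r + 1) h : ℕ) →
      ∀ (G : Type) (_ : AddCommGroup G) (_ : DecidableEq G)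
        (A : Finset G) (K : ℝ) (lam : Fin h → ℤ),
        A.Nonempty →
        (∀ i, lam i ≠ 0) →
        (∀ i, |lam i| ≤ 2 ^ r) →
        ((A - A).card : ℝ) = K * A.card →
        ((∑ i, dilate (lam i) A).card : ℝ) ≤
          K ^ ((7 * r * h : ℝ) / Real.log (r + h)) * A.card := by
  refine ⟨8 ^ 10, fun r h _ hh hlog G _ _ A K lam hA _ hlam hK ↦ ?_⟩
  have hmax : 8 ^ 10 ≤ max (r + 1) h := le_max_of_le_right hh
  exact sum_of_dilates_bound_diff_general (R := ℤ) (.of_card_sub_le hA hK.le) hmax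
    ((two_hundred_mul_log_le hmax).trans hlog) lam hlam
end

section
/- There exist a constant C > 0 and a threshold N such that the following holds for all positive integers r and h with r + h ≥ N. Let A be a finite nonempty subset of an abelian group, let K be a real number with |A+A| = K·|A|, and let λ₁, …, λ_h be nonzero integers with |λᵢ| ≤ 2^r for every i. Then |λ₁·A + λ₂·A + … + λ_h·A| ≤ K^(C·(r+h)²/ln(r+h)) · |A|. -/
open Pointwise

/-!
By the Plünnecke–Ruzsa inequality and Ruzsa's covering lemma, small doubling of `A` makes
`D = A - A` a `K ^ 5`-approximate subgroup, and each `λ · A` lies in one translate of `λ · D`. By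
symmetry of `D` the coefficients may be taken to be natural numbers, and they are then expanded in
base `q` by a Horner scheme. At each digit, grouping the `h` summands by the value of the digit
covers `∑ cᵢ · D` by `K ^ (5 h)` translates of `∑_{x < q} x · D`; together with the contribution
`q · D` of the higher digits this lies in the `q ^ 2`-fold sumset of `D`, which `K ^ (5 q ^ 2)`
translates of `D` cover. With `L` digits the total exponent is of order `L (h + q ^ 2)`; for
`n = r + h`, choosing `q ≈ √n` gives `L ≈ n / log n` and hence the exponent `O(n ^ 2 / log n)`.
-/

section Covering

variable {G : Type*} {K L : ℝ}

section AddMonoid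

variable [AddMonoid G]

lemma covByVAdd_image {H : Type*} [AddMonoid H] {A B : Set G} (f : G →+ H)
    (h : CovByVAdd G K A B) : CovByVAdd H K (f '' A) (f '' B) := by
  classical
  obtain ⟨S, hS, hAB⟩ := h
  refine ⟨S.image f, le_trans (mod_cast Finset.card_image_le) hS, ?_⟩
  calc f '' A ⊆ f '' (S + B) := Set.image_mono hAB
    _ = (S.image f : Set H) + f '' B := by rw [Set.image_add, Finset.coe_image]

lemma card_le_mul_card_of_covByVAdd {X Y : Finset G} (h : CovByVAdd G K (X : Set G) Y) :
    (X.card : ℝ) ≤ K * Y.card := by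
  classical
  obtain ⟨S, hS, hXY⟩ := h
  have hXY : X ⊆ S + Y := by
    rw [← Finset.coe_subset, Finset.coe_add]
    exact hXY
  calc (X.card : ℝ) ≤ (S + Y).card := mod_cast Finset.card_le_card hXY
    _ ≤ S.card * Y.card := mod_cast Finset.card_add_le
    _ ≤ K * Y.card := by gcongr

end AddMonoid

section AddCommMonoid

variable [AddCommMonoid G]

lemma covByVAdd_add {A A' B B' : Set G} (h : CovByVAdd G K A B)
    (h' : CovByVAdd G L A' B') : CovByVAdd G (K * L) (A + A') (B + B') := by
  classical
  have hK : 0 ≤ K := h.nonneg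
  obtain ⟨S, hS, hAB⟩ := h
  obtain ⟨T, hT, hAB'⟩ := h'
  refine ⟨S + T, ?_, ?_⟩
  · calc ((S + T).card : ℝ) ≤ S.card * T.card := mod_cast Finset.card_add_le
      _ ≤ K * L := by gcongr
  · calc A + A' ⊆ (S + B) + (T + B') := Set.add_subset_add hAB hAB'
      _ = ((S + T : Finset G) : Set G) + (B + B') := by
        rw [Finset.coe_add, add_add_add_comm]

lemma covByVAdd_sum {ι : Type*} {s : Finset ι} {κ : ι → ℝ} {X Y : ι → Set G}
    (h : ∀ i ∈ s, CovByVAdd G (κ i) (X i) (Y i)) :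
    CovByVAdd G (∏ i ∈ s, κ i) (∑ i ∈ s, X i) (∑ i ∈ s, Y i) := by
  classical
  induction s using Finset.induction_on with
  | empty => exact .rfl
  | insert a s ha ih =>
    rw [Finset.sum_insert ha, Finset.sum_insert ha, Finset.prod_insert ha]
    rw [Finset.forall_mem_insert] at h
    exact covByVAdd_add h.1 (ih h.2)

end AddCommMonoid

end Covering

section Dilate

variable {G : Type*} [AddCommGroup G]

/-- The dilate `n · X = {n • x : x ∈ X}` of a set. It is bundled as an endomorphism of the additive
monoid of sets under pointwise addition, so that it commutes with finite sumsets. -/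
def setDilate (n : ℤ) : Set G →+ Set G where
  toFun X := zsmulAddGroupHom n '' X
  map_zero' := Set.image_zero.trans (by rw [map_zero, Set.singleton_zero])
  map_add' _ _ := Set.image_add _

lemma setDilate_apply (n : ℤ) (X : Set G) : setDilate n X = (n • ·) '' X := rfl

lemma setDilate_zero {X : Set G} (hX : X.Nonempty) : setDilate 0 X = 0 := by
  simp only [setDilate_apply, zero_smul, hX.image_const, Set.singleton_zero]

lemma setDilate_mul (a b : ℤ) (X : Set G) : setDilate (a * b) X = setDilate a (setDilate b X) := by
  simp only [setDilate_apply, Set.image_image, mul_smul]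

lemma setDilate_add_subset (a b : ℤ) (X : Set G) :
    setDilate (a + b) X ⊆ setDilate a X + setDilate b X := by
  rintro _ ⟨x, hx, rfl⟩
  exact ⟨a • x, ⟨x, hx, rfl⟩, b • x, ⟨x, hx, rfl⟩, (add_smul a b x).symm⟩

lemma setDilate_natCast_subset_nsmul (n : ℕ) (X : Set G) : setDilate n X ⊆ n • X := by
  rintro _ ⟨x, hx, rfl⟩
  simpa using Set.nsmul_mem_nsmul hx (n := n)

lemma setDilate_neg (n : ℤ) (X : Set G) : setDilate (-n) X = setDilate n (-X) := by
  simp only [setDilate_apply, ← Set.image_neg_eq_neg, Set.image_image, neg_smul, smul_neg]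

lemma setDilate_natAbs {X : Set G} (hX : -X = X) (n : ℤ) :
    setDilate n.natAbs X = setDilate n X := by
  rcases Int.natAbs_eq n with hn | hn
  · rw [← hn]
  · conv_rhs => rw [hn, setDilate_neg, hX]

lemma covByVAdd_setDilate {K : ℝ} {X Y : Set G} (n : ℤ) (h : CovByVAdd G K X Y) :
    CovByVAdd G K (setDilate n X) (setDilate n Y) :=
  covByVAdd_image (zsmulAddGroupHom n) h

end Dilate

section ApproximateSubgroup

variable {G : Type*} [AddCommGroup G] {K : ℝ} {D : Set G} {ι : Type*} {s : Finset ι} {q : ℕ}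

lemma covByVAdd_nsmul_self (hD : IsApproximateAddSubgroup K D) (n : ℕ) :
    CovByVAdd G (K ^ n) (n • D) D := by
  induction n with
  | zero => simpa using CovByVAdd.of_subset (M := G) (Set.zero_subset.2 hD.zero_mem)
  | succ n ih =>
    have hadd : CovByVAdd G (K ^ n * 1) (n • D + D) (2 • D) := by
      rw [two_nsmul]
      exact covByVAdd_add ih .rfl
    simpa only [succ_nsmul, mul_one, pow_succ] using hadd.trans hD.two_nsmul_covByVAdd

lemma covByVAdd_sum_setDilate_sum_range (hD : IsApproximateAddSubgroup K D) {c : ι → ℕ}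
    (hc : ∀ i ∈ s, c i < q) :
    CovByVAdd G (K ^ s.card) (∑ i ∈ s, setDilate (c i) D)
      (∑ x ∈ Finset.range q, setDilate x D) := by
  have hmaps : ∀ i ∈ s, c i ∈ Finset.range q := fun i hi ↦ Finset.mem_range.2 (hc i hi)
  -- Merging `m` equal coefficients `x` into `x · (m • D)` costs a factor `K ^ m`, whatever `x` is.
  have hfiber (x : ℕ) :
      ∑ i ∈ s with c i = x, setDilate (c i) D = setDilate x ((s.filter (c · = x)).card • D) := by
    rw [map_nsmul, ← Finset.sum_const]
    exact Finset.sum_congr rfl fun i hi ↦ by rw [(Finset.mem_filter.1 hi).2]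
  rw [← Finset.sum_fiberwise_of_maps_to hmaps, Finset.card_eq_sum_card_fiberwise hmaps,
    ← Finset.prod_pow_eq_pow_sum]
  simp only [hfiber]
  exact covByVAdd_sum fun x _ ↦ covByVAdd_setDilate x (covByVAdd_nsmul_self hD _)

lemma sum_range_setDilate_add_setDilate_subset_nsmul (h0 : 0 ∈ D) (q : ℕ) :
    ∑ x ∈ Finset.range q, setDilate x D + setDilate q D ⊆ (q ^ 2) • D := by
  rw [← Finset.sum_range_succ (fun x : ℕ ↦ setDilate (x : ℤ) D)]
  calc ∑ x ∈ Finset.range (q + 1), setDilate x D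
      ⊆ ∑ x ∈ Finset.range (q + 1), x • D :=
        Set.finsetSum_subset_finsetSum _ _ _ fun x _ ↦ setDilate_natCast_subset_nsmul x D
    _ = (∑ x ∈ Finset.range (q + 1), x) • D := (Finset.sum_nsmul_assoc ..)
    _ ⊆ (q ^ 2) • D := by
        refine Set.nsmul_subset_nsmul_right h0 ?_
        have hgauss := Finset.sum_range_id_mul_two (q + 1)
        rw [Nat.add_sub_cancel] at hgauss
        nlinarith only [hgauss, q.le_mul_self]

lemma sum_setDilate_subset_mod_add_div (s : Finset ι) (c : ι → ℕ) (q : ℕ) (D : Set G) :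
    ∑ i ∈ s, setDilate (c i) D ⊆
      ∑ i ∈ s, setDilate (c i % q : ℕ) D + setDilate q (∑ i ∈ s, setDilate (c i / q : ℕ) D) := by
  rw [map_sum, ← Finset.sum_add_distrib]
  refine Set.finsetSum_subset_finsetSum _ _ _ fun i _ ↦ ?_
  rw [← setDilate_mul, ← Nat.cast_mul]
  conv_lhs => rw [← Nat.mod_add_div (c i) q, Nat.cast_add]
  exact setDilate_add_subset _ _ D

lemma covByVAdd_sum_setDilate_natCast (hD : IsApproximateAddSubgroup K D) (L : ℕ) {c : ι → ℕ}
    (hc : ∀ i ∈ s, c i < q ^ L) :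
    CovByVAdd G (K ^ (L * (s.card + q ^ 2))) (∑ i ∈ s, setDilate (c i) D) D := by
  induction L generalizing c with
  | zero =>
    have hzero : ∑ i ∈ s, setDilate (c i) D = 0 := Finset.sum_eq_zero fun i hi ↦ by
      rw [Nat.lt_one_iff.1 (hc i hi), Nat.cast_zero, setDilate_zero ⟨0, hD.zero_mem⟩]
    simpa only [zero_mul, pow_zero, hzero] using
      CovByVAdd.of_subset (M := G) (Set.zero_subset.2 hD.zero_mem)
  | succ L ih =>
    have hmod : ∀ i ∈ s, c i % q < q := fun i hi ↦
      Nat.mod_lt _ (Nat.pos_of_ne_zero fun hq ↦ by simpa [hq] using hc i hi)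
    have hdiv : ∀ i ∈ s, c i / q < q ^ L := fun i hi ↦
      Nat.div_lt_of_lt_mul (pow_succ' q L ▸ hc i hi)
    have hdigits := covByVAdd_add (covByVAdd_sum_setDilate_sum_range hD hmod)
      (covByVAdd_setDilate q (ih hdiv))
    have hcover := ((hdigits.subset_left (sum_setDilate_subset_mod_add_div s c q D)).subset_right
      (sum_range_setDilate_add_setDilate_subset_nsmul hD.zero_mem q)).trans
        (covByVAdd_nsmul_self hD (q ^ 2))
    convert hcover using 1
    ring

theorem covByVAdd_sum_setDilate (hD : IsApproximateAddSubgroup K D) (L : ℕ) {l : ι → ℤ}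
    (hl : ∀ i ∈ s, |l i| < q ^ L) :
    CovByVAdd G (K ^ (L * (s.card + q ^ 2))) (∑ i ∈ s, setDilate (l i) D) D := by
  have hnat : ∀ i ∈ s, (l i).natAbs < q ^ L := fun i hi ↦ by
    zify
    exact hl i hi
  simpa only [setDilate_natAbs hD.neg_eq_self] using covByVAdd_sum_setDilate_natCast hD L hnat

end ApproximateSubgroup

section SmallDoubling

variable {G : Type*} [AddCommGroup G] [DecidableEq G] {A : Finset G} {K : ℝ}

lemma one_le_of_card_add_self_le (hA : A.Nonempty) (hAK : ((A + A).card : ℝ) ≤ K * A.card) :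
    1 ≤ K := by
  have hle : (A.card : ℝ) ≤ (A + A).card := mod_cast Finset.card_le_card_add_right hA
  have hpos : (0 : ℝ) < A.card := mod_cast hA.card_pos
  exact le_of_mul_le_mul_right (by linarith) hpos

lemma card_nsmul_sub_nsmul_le (hA : A.Nonempty) (hAK : ((A + A).card : ℝ) ≤ K * A.card)
    (m n : ℕ) : ((m • A - n • A).card : ℝ) ≤ K ^ (m + n) * A.card := by
  have hpos : (0 : ℝ) < A.card := mod_cast hA.card_pos
  have hrat := NNRat.cast_mono (K := ℝ)
    (Finset.pluennecke_ruzsa_inequality_nsmul_sub_nsmul_add hA A m n)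
  push_cast at hrat
  calc ((m • A - n • A).card : ℝ) ≤ ((A + A).card / A.card : ℝ) ^ (m + n) * A.card := hrat
    _ ≤ K ^ (m + n) * A.card := by
        gcongr
        exact (div_le_iff₀ hpos).2 hAK

lemma isApproximateAddSubgroup_sub_self (hA : A.Nonempty)
    (hAK : ((A + A).card : ℝ) ≤ K * A.card) :
    IsApproximateAddSubgroup (K ^ 5) ((A - A : Finset G) : Set G) where
  zero_mem := Finset.mem_coe.2 hA.zero_mem_sub
  neg_eq_self := by rw [Finset.coe_sub, neg_sub]
  two_nsmul_covByVAdd := by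
    -- Ruzsa covering by `A` needs a bound on `2(A - A) + A = 3A - 2A`, whence the exponent `3 + 2`.
    have hcard : ((2 • (A - A) + A).card : ℝ) ≤ K ^ 5 * A.card := by
      convert card_nsmul_sub_nsmul_le hA hAK 3 2 using 3
      rw [nsmul_sub, sub_add_eq_add_sub, succ_nsmul A 2]
    obtain ⟨S, -, hS, hcover⟩ := Finset.ruzsa_covering_add hA hcard
    refine ⟨S, hS, ?_⟩
    rw [← Finset.coe_nsmul]
    exact_mod_cast hcover

end SmallDoubling

section SumOfDilates

variable {G : Type} [AddCommGroup G] [DecidableEq G] {A : Finset G} {K : ℝ}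

lemma coe_dilate (l : ℤ) (A : Finset G) : (dilate l A : Set G) = setDilate l (A : Set G) :=
  Finset.coe_image

lemma covByVAdd_dilate_setDilate_sub_self (hA : A.Nonempty) (l : ℤ) :
    CovByVAdd G 1 (dilate l A : Set G) (setDilate l ((A - A : Finset G) : Set G)) := by
  obtain ⟨a, ha⟩ := hA
  have hcov : CovByVAdd G 1 (A : Set G) ((A - A : Finset G) : Set G) := by
    refine ⟨{a}, by simp, fun x hx ↦ ?_⟩
    rw [Finset.coe_singleton]
    exact ⟨a, rfl, x - a, Finset.mem_coe.2 (Finset.sub_mem_sub hx ha), add_sub_cancel a x⟩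
  exact coe_dilate l A ▸ covByVAdd_setDilate l hcov

theorem card_sum_dilate_le {ι : Type*} {s : Finset ι} {l : ι → ℤ} {q L : ℕ} (hA : A.Nonempty)
    (hAK : ((A + A).card : ℝ) ≤ K * A.card) (hl : ∀ i ∈ s, |l i| < q ^ L) :
    ((∑ i ∈ s, dilate (l i) A).card : ℝ) ≤
      K ^ (5 * (L * (s.card + q ^ 2)) + 2) * A.card := by
  have hK : 1 ≤ K := one_le_of_card_add_self_le hA hAK
  have hshift := covByVAdd_sum (s := s) fun i _ ↦ covByVAdd_dilate_setDilate_sub_self hA (l i)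
  rw [Finset.prod_const_one, ← Finset.coe_sum] at hshift
  have hcover := hshift.trans
    (covByVAdd_sum_setDilate (isApproximateAddSubgroup_sub_self hA hAK) L hl)
  calc ((∑ i ∈ s, dilate (l i) A).card : ℝ)
      ≤ (1 * (K ^ 5) ^ (L * (s.card + q ^ 2))) * (A - A).card :=
        card_le_mul_card_of_covByVAdd hcover
    _ ≤ (1 * (K ^ 5) ^ (L * (s.card + q ^ 2))) * (K ^ 2 * A.card) := by
        gcongr
        simpa using card_nsmul_sub_nsmul_le hA hAK 1 1
    _ = K ^ (5 * (L * (s.card + q ^ 2)) + 2) * A.card := by ring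

end SumOfDilates

lemma exists_base_and_length {n : ℕ} (hn : 2 ≤ n) :
    ∃ q L : ℕ, 2 ^ n < q ^ L ∧
      (5 * (L * (n + q ^ 2)) + 2 : ℝ) ≤ 77 * (n : ℝ) ^ 2 / Real.log n := by
  have hn' : (2 : ℝ) ≤ n := mod_cast hn
  have hlog : 0 < Real.log n := Real.log_pos (by linarith)
  set q := Nat.sqrt n + 1
  set x : ℝ := n / Real.log n with hx
  have hq : 0 < Real.log q :=
    Real.log_pos (mod_cast Nat.lt_add_of_pos_left (Nat.sqrt_pos.2 (by lia)))
  have hlog_q : Real.log n ≤ 2 * Real.log q := by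
    rw [← Nat.cast_two, ← Real.log_pow]
    exact Real.log_le_log (by positivity) (mod_cast (Nat.lt_succ_sqrt' n).le)
  have hq_sq : (q : ℝ) ^ 2 ≤ 4 * n := by
    have hsqrt : (Nat.sqrt n : ℝ) ^ 2 ≤ n := mod_cast Nat.sqrt_le' n
    have hsqrt_one : (1 : ℝ) ≤ Nat.sqrt n := mod_cast Nat.sqrt_pos.2 (by lia)
    push_cast [q]
    nlinarith only [hsqrt, hsqrt_one]
  have hx_one : 1 ≤ x := (one_le_div hlog).2 (Real.log_le_self (by positivity))
  have hL : (⌈2 * x⌉₊ : ℝ) ≤ 3 * x := by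
    linarith [Nat.ceil_lt_add_one (show 0 ≤ 2 * x by positivity)]
  refine ⟨q, ⌈2 * x⌉₊, ?_, ?_⟩
  · suffices (2 : ℝ) ^ n < q ^ ⌈2 * x⌉₊ from mod_cast this
    rw [Real.lt_pow_iff_log_lt (by positivity) (by positivity), Real.log_pow]
    calc n * Real.log 2 < n := by nlinarith [Real.log_two_lt_d9]
      _ = x * Real.log n := by rw [hx]; field_simp
      _ ≤ x * (2 * Real.log q) := by gcongr
      _ = 2 * x * Real.log q := by ring
      _ ≤ ⌈2 * x⌉₊ * Real.log q := by gcongr; exact Nat.le_ceil _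
  · calc (5 * (⌈2 * x⌉₊ * (n + q ^ 2)) + 2 : ℝ) ≤ 5 * (3 * x * (n + 4 * n)) + 2 := by gcongr
      _ ≤ 77 * (n * x) := by nlinarith
      _ = 77 * (n : ℝ) ^ 2 / Real.log n := by rw [hx]; ring

/-- The earlier version of the main theorem (via Chung–Erdős–Spencer): there is a constant
`C > 0` and threshold `N` such that for positive integers `r, h` with `r + h ≥ N`, if
`|A+A| = K|A|` and the `λᵢ` are nonzero with `|λᵢ| ≤ 2^r`, then
`|λ₁·A + ⋯ + λ_h·A| ≤ K^(C(r+h)²/ln(r+h)) |A|`. -/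
theorem sum_of_dilates_bound_squared :
    ∃ C : ℝ, 0 < C ∧ ∃ N : ℕ, ∀ r h : ℕ, 0 < r → 0 < h → N ≤ r + h →
      ∀ (G : Type) (_ : AddCommGroup G) (_ : DecidableEq G)
        (A : Finset G) (K : ℝ) (lam : Fin h → ℤ),
        A.Nonempty →
        (∀ i, lam i ≠ 0) →
        (∀ i, |lam i| ≤ 2 ^ r) →
        ((A + A).card : ℝ) = K * A.card →
        ((∑ i, dilate (lam i) A).card : ℝ) ≤
          K ^ (C * (r + h : ℝ) ^ 2 / Real.log (r + h)) * A.card := by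
  refine ⟨77, by norm_num, 2, fun r h _ _ hN G _ _ A K lam hA _ hlam hAK ↦ ?_⟩
  obtain ⟨q, L, hqL, hexp⟩ := exists_base_and_length hN
  have hlam_lt : ∀ i ∈ Finset.univ, |lam i| < (q : ℤ) ^ L := fun i _ ↦
    calc |lam i| ≤ 2 ^ r := hlam i
      _ ≤ 2 ^ (r + h) := pow_le_pow_right₀ one_le_two (Nat.le_add_right r h)
      _ < (q : ℤ) ^ L := mod_cast hqL
  calc ((∑ i, dilate (lam i) A).card : ℝ)
      ≤ K ^ (5 * (L * (h + q ^ 2)) + 2) * A.card := by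
        simpa only [Finset.card_fin] using card_sum_dilate_le hA hAK.le hlam_lt
    _ ≤ K ^ (77 * (r + h : ℝ) ^ 2 / Real.log (r + h)) * A.card := by
        rw [← Real.rpow_natCast]
        gcongr
        · exact one_le_of_card_add_self_le hA hAK.le
        · push_cast at hexp ⊢
          refine le_trans ?_ hexp
          gcongr
          simp
end
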